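/- Finite-n upper bound in the proof of Corollary 2: let Λ be a quantum channel on d×d complex matrices, h a positive semidefinite Hermitian d×d matrix, and 𝔢 ∈ [0, λ_max(h)]. Suppose that for every e ∈ [0, λ_max(h)] and every n ≥ 1 there exists a d×d density matrix σ with re Tr[σ h] ≤ e such that for all unit vectors ψ_1, …, ψ_n ∈ ℂ^d with Σ_i ⟨ψ_i, h ψ_i⟩ ≤ n e one has ℰ(Λ^{⊗n}(|ψ_1⟩⟨ψ_1| ⊗ ⋯ ⊗ |ψ_n⟩⟨ψ_n|); h^{(n)}) ≤ ℰ((Λ(σ))^{⊗n}; h^{(n)}). Then for every n ≥ 1 and every separable n-site density matrix ρ with re Tr[ρ h^{(n)}] ≤ n𝔢, one has (1/n) ℰ(Λ^{⊗n}(ρ); h^{(n)}) ≤ χ_tot(Λ;𝔢). -/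

import Mathlib

/-!
Diagonalizing every local factor writes a separable state as a convex combination, with weights
`w j`, of pure product states (`sep_pure_decomp`). Let `ev j` be the mean energy per site of the
`j`-th one; it lies in `[0, λ_max(h)]` by `density_energy_le`, and since the energy is linear the
average of `ev` is at most `𝔢`. The ergotropy is convex (`ergo_sum_le`), so it suffices to bound it
on each `Λ^{⊗n}`-image of a pure product state. The optimality hypothesis at energy `ev j` bounds it
by the ergotropy of `(Λ σ)^{⊗n}` for a state `σ` of energy at most `ev j`, hence by
`n * ℰ_tot(Λ σ; h) ≤ n * ℰ_tot^{(1)}(Λ; ev j)`. The weights `w j` and energies `ev j` are admissible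
in the definition of `χ_tot(Λ; 𝔢)`.

The real suprema involved are only meaningful when bounded above. This follows from
`ergo_le`: the ergotropy is at most the energy, for a positive semidefinite Hamiltonian, so that
`ℰ_tot`, `ℰ_tot^{(1)}` and `χ_tot` are all at most `λ_max(h)`.
-/

open Matrix Filter Topology
open scoped ComplexOrder Kronecker

noncomputable section

/-- A density matrix: positive semidefinite with unit trace. -/
def IsDensity {n : Type*} [Fintype n] [DecidableEq n] (ρ : Matrix n n ℂ) : Prop :=
  ρ.PosSemidef ∧ ρ.trace = 1

/-- The ergotropy `ℰ(ρ;H) = ⨆_{U ∈ U(d)} (re Tr[ρH] − re Tr[U ρ U† H])`. -/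
def ergo {n : Type*} [Fintype n] [DecidableEq n] (ρ H : Matrix n n ℂ) : ℝ :=
  ⨆ U : Matrix.unitaryGroup n ℂ,
    ((ρ * H).trace.re -
      ((U : Matrix n n ℂ) * ρ * star (U : Matrix n n ℂ) * H).trace.re)

/-- `N`-fold tensor power of a `d × d` matrix:
`ρ^{⊗N} f g = ∏_{i<N} ρ (f i) (g i)`. -/
def tpow {d : ℕ} (ρ : Matrix (Fin d) (Fin d) ℂ) (N : ℕ) :
    Matrix (Fin N → Fin d) (Fin N → Fin d) ℂ :=
  Matrix.of fun f g => ∏ i, ρ (f i) (g i)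

/-- Tensor product `ρ₁ ⊗ ⋯ ⊗ ρₙ` of `n` single-site matrices. -/
def prodMat {d n : ℕ} (ρs : Fin n → Matrix (Fin d) (Fin d) ℂ) :
    Matrix (Fin n → Fin d) (Fin n → Fin d) ℂ :=
  Matrix.of fun f g => ∏ i, ρs i (f i) (g i)

/-- Noninteracting `N`-site Hamiltonian:
`h^{(N)} f g = Σ_{i<N} h (f i) (g i) · ∏_{j≠i} (if f j = g j then 1 else 0)`. -/
def hSum {d : ℕ} (h : Matrix (Fin d) (Fin d) ℂ) (N : ℕ) :
    Matrix (Fin N → Fin d) (Fin N → Fin d) ℂ :=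
  Matrix.of fun f g =>
    ∑ i, h (f i) (g i) * ∏ j ∈ Finset.univ.erase i, (if f j = g j then (1:ℂ) else 0)

/-- The ampliation `Λ ⊗ id_k` of a linear map on `d × d` matrices. -/
def Ampliation {d : ℕ} (Λ : Matrix (Fin d) (Fin d) ℂ →ₗ[ℂ] Matrix (Fin d) (Fin d) ℂ)
    (k : ℕ) (M : Matrix (Fin d × Fin k) (Fin d × Fin k) ℂ) :
    Matrix (Fin d × Fin k) (Fin d × Fin k) ℂ :=
  Matrix.of fun p q => Λ (Matrix.of fun i' j' => M (i', p.2) (j', q.2)) p.1 q.1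

/-- A quantum channel: a ℂ-linear, trace-preserving, completely positive map. -/
def IsChannel {d : ℕ} (Λ : Matrix (Fin d) (Fin d) ℂ →ₗ[ℂ] Matrix (Fin d) (Fin d) ℂ) : Prop :=
  (∀ M, (Λ M).trace = M.trace) ∧
  ∀ k : ℕ, ∀ M : Matrix (Fin d × Fin k) (Fin d × Fin k) ℂ,
    M.PosSemidef → (Ampliation Λ k M).PosSemidef

/-- Local ergotropy of an `n`-site state: the supremum is restricted to
product unitaries `U₁ ⊗ ⋯ ⊗ Uₙ`. -/
def locErgo {d n : ℕ} (σ H : Matrix (Fin n → Fin d) (Fin n → Fin d) ℂ) : ℝ :=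
  ⨆ U : Fin n → Matrix.unitaryGroup (Fin d) ℂ,
    ((σ * H).trace.re -
      ((prodMat fun i => (U i : Matrix (Fin d) (Fin d) ℂ)) * σ *
        star (prodMat fun i => (U i : Matrix (Fin d) (Fin d) ℂ)) * H).trace.re)

/-- Von Neumann entropy `S(σ) = Σ_i −λ_i log λ_i` of a Hermitian matrix. -/
def vnEntropy {n : Type*} [Fintype n] [DecidableEq n]
    {σ : Matrix n n ℂ} (hσ : σ.IsHermitian) : ℝ :=
  ∑ i, Real.negMulLog (hσ.eigenvalues i)

/-- `i`-th single-site reduced density matrix of an `n`-site state. -/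
def red {d n : ℕ} (ρ : Matrix (Fin n → Fin d) (Fin n → Fin d) ℂ) (i : Fin n) :
    Matrix (Fin d) (Fin d) ℂ :=
  Matrix.of fun a b =>
    ∑ f ∈ Finset.univ.filter (fun f : Fin n → Fin d => f i = a), ρ f (Function.update f i b)

/-- Separability: `ρ` is a convex combination of product density matrices. -/
def SepState {d n : ℕ} (ρ : Matrix (Fin n → Fin d) (Fin n → Fin d) ℂ) : Prop :=
  ∃ (m : ℕ) (p : Fin m → ℝ) (σs : Fin m → Fin n → Matrix (Fin d) (Fin d) ℂ),
    (∀ k, 0 ≤ p k) ∧ (∑ k, p k = 1) ∧ (∀ k i, IsDensity (σs k i)) ∧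
    ρ = ∑ k, (p k : ℂ) • prodMat (σs k)

/-- Total ergotropy `ℰ_tot(σ;h) = ⨆_{N≥1} ℰ(σ^{⊗N}; h^{(N)})/N`. -/
def Etot {d : ℕ} (σ h : Matrix (Fin d) (Fin d) ℂ) : ℝ :=
  ⨆ N : ℕ+, ergo (tpow σ (N:ℕ)) (hSum h (N:ℕ)) / (N:ℕ)

/-- Largest eigenvalue of a Hermitian matrix. -/
def lamMax {d : ℕ} {h : Matrix (Fin d) (Fin d) ℂ} (hh : h.IsHermitian) : ℝ :=
  ⨆ i, hh.eigenvalues i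

/-- Single-shot energy-constrained maximal output ergotropy `ℰ^{(1)}(Λ;e)`. -/
def E1 {d : ℕ} (Λ : Matrix (Fin d) (Fin d) ℂ →ₗ[ℂ] Matrix (Fin d) (Fin d) ℂ)
    (h : Matrix (Fin d) (Fin d) ℂ) (e : ℝ) : ℝ :=
  sSup {x | ∃ ρ : Matrix (Fin d) (Fin d) ℂ,
    IsDensity ρ ∧ (ρ * h).trace.re ≤ e ∧ x = ergo (Λ ρ) h}

/-- Single-shot energy-constrained maximal output total ergotropy `ℰ_tot^{(1)}(Λ;e)`. -/
def E1tot {d : ℕ} (Λ : Matrix (Fin d) (Fin d) ℂ →ₗ[ℂ] Matrix (Fin d) (Fin d) ℂ)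
    (h : Matrix (Fin d) (Fin d) ℂ) (e : ℝ) : ℝ :=
  sSup {x | ∃ ρ : Matrix (Fin d) (Fin d) ℂ,
    IsDensity ρ ∧ (ρ * h).trace.re ≤ e ∧ x = Etot (Λ ρ) h}

/-- `χ(Λ;e)`: supremum of `Σ_j p_j ℰ^{(1)}(Λ;e_j)` over finite probability vectors
`(p_j)` and energies `e_j ∈ [0, lmax]` with `Σ_j p_j e_j ≤ e`. -/
def chi {d : ℕ} (Λ : Matrix (Fin d) (Fin d) ℂ →ₗ[ℂ] Matrix (Fin d) (Fin d) ℂ)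
    (h : Matrix (Fin d) (Fin d) ℂ) (lmax e : ℝ) : ℝ :=
  sSup {x | ∃ (m : ℕ) (p ev : Fin m → ℝ),
    (∀ j, 0 ≤ p j) ∧ (∑ j, p j = 1) ∧ (∀ j, ev j ∈ Set.Icc (0:ℝ) lmax) ∧
    (∑ j, p j * ev j ≤ e) ∧ x = ∑ j, p j * E1 Λ h (ev j)}

/-- `χ_tot(Λ;e)`: as `χ` but with the total ergotropy. -/
def chiTot {d : ℕ} (Λ : Matrix (Fin d) (Fin d) ℂ →ₗ[ℂ] Matrix (Fin d) (Fin d) ℂ)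
    (h : Matrix (Fin d) (Fin d) ℂ) (lmax e : ℝ) : ℝ :=
  sSup {x | ∃ (m : ℕ) (p ev : Fin m → ℝ),
    (∀ j, 0 ≤ p j) ∧ (∑ j, p j = 1) ∧ (∀ j, ev j ∈ Set.Icc (0:ℝ) lmax) ∧
    (∑ j, p j * ev j ≤ e) ∧ x = ∑ j, p j * E1tot Λ h (ev j)}

/-- `ℰ_loc^{(n)}(Λ;E)`. -/
def ElocN {d : ℕ}
    (Λfam : ∀ n : ℕ, Matrix (Fin n → Fin d) (Fin n → Fin d) ℂ →ₗ[ℂ]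
      Matrix (Fin n → Fin d) (Fin n → Fin d) ℂ)
    (h : Matrix (Fin d) (Fin d) ℂ) (n : ℕ) (E : ℝ) : ℝ :=
  sSup {x | ∃ ρ : Matrix (Fin n → Fin d) (Fin n → Fin d) ℂ,
    IsDensity ρ ∧ (ρ * hSum h n).trace.re ≤ E ∧ x = locErgo (Λfam n ρ) (hSum h n)}

/-- `ℰ_{loc,sep}^{(n)}(Λ;E)`. -/
def ElocSepN {d : ℕ}
    (Λfam : ∀ n : ℕ, Matrix (Fin n → Fin d) (Fin n → Fin d) ℂ →ₗ[ℂ]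
      Matrix (Fin n → Fin d) (Fin n → Fin d) ℂ)
    (h : Matrix (Fin d) (Fin d) ℂ) (n : ℕ) (E : ℝ) : ℝ :=
  sSup {x | ∃ ρ : Matrix (Fin n → Fin d) (Fin n → Fin d) ℂ,
    IsDensity ρ ∧ SepState ρ ∧ (ρ * hSum h n).trace.re ≤ E ∧
    x = locErgo (Λfam n ρ) (hSum h n)}

/-- `ℰ_sep^{(n)}(Λ;E)`. -/
def EsepN {d : ℕ}
    (Λfam : ∀ n : ℕ, Matrix (Fin n → Fin d) (Fin n → Fin d) ℂ →ₗ[ℂ]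
      Matrix (Fin n → Fin d) (Fin n → Fin d) ℂ)
    (h : Matrix (Fin d) (Fin d) ℂ) (n : ℕ) (E : ℝ) : ℝ :=
  sSup {x | ∃ ρ : Matrix (Fin n → Fin d) (Fin n → Fin d) ℂ,
    IsDensity ρ ∧ SepState ρ ∧ (ρ * hSum h n).trace.re ≤ E ∧
    x = ergo (Λfam n ρ) (hSum h n)}

/-! ### Positivity and traces -/

open scoped MatrixOrder Matrix.Norms.L2Operator in
theorem PosSemidef.exists_factor {n : Type*} [Fintype n] [DecidableEq n] {A : Matrix n n ℂ}
    (hA : A.PosSemidef) : ∃ B : Matrix n n ℂ, A = Bᴴ * B :=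
  CStarAlgebra.nonneg_iff_eq_star_mul_self.mp hA.nonneg

theorem trace_mul_re_nonneg {n : Type*} [Fintype n] [DecidableEq n] {A H : Matrix n n ℂ}
    (hA : A.PosSemidef) (hH : H.PosSemidef) : 0 ≤ (A * H).trace.re := by
  obtain ⟨B, rfl⟩ := PosSemidef.exists_factor hA
  rw [Matrix.trace_mul_comm, ← Matrix.mul_assoc, Matrix.trace_mul_comm, ← Matrix.mul_assoc]
  exact (Complex.nonneg_iff.mp (hH.mul_mul_conjTranspose_same B).trace_nonneg).1

theorem lamMax_sub_posSemidef {d : ℕ} {h : Matrix (Fin d) (Fin d) ℂ} (hh : h.IsHermitian) :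
    (((lamMax hh : ℝ) : ℂ) • (1 : Matrix (Fin d) (Fin d) ℂ) - h).PosSemidef := by
  set U : Matrix (Fin d) (Fin d) ℂ := hh.eigenvectorUnitary.1
  have hUU : U * Uᴴ = 1 := Unitary.coe_mul_star_self hh.eigenvectorUnitary
  have hspec : h = U * diagonal (fun i => (hh.eigenvalues i : ℂ)) * Uᴴ := hh.spectral_theorem
  have key : ((lamMax hh : ℝ) : ℂ) • (1 : Matrix (Fin d) (Fin d) ℂ) - h
      = U * diagonal (fun i => ((lamMax hh - hh.eigenvalues i : ℝ) : ℂ)) * Uᴴ := by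
    have hD : diagonal (fun i => ((lamMax hh - hh.eigenvalues i : ℝ) : ℂ))
        = ((lamMax hh : ℝ) : ℂ) • (1 : Matrix (Fin d) (Fin d) ℂ)
          - diagonal (fun i => (hh.eigenvalues i : ℂ)) := by
      ext i j
      by_cases hij : i = j
      · subst hij; simp
      · simp [hij]
    rw [hD, Matrix.mul_sub, Matrix.sub_mul, ← hspec, Matrix.mul_smul, Matrix.smul_mul,
      Matrix.mul_one, hUU]
  rw [key]
  refine Matrix.PosSemidef.mul_mul_conjTranspose_same (Matrix.PosSemidef.diagonal fun i => ?_) U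
  have : hh.eigenvalues i ≤ lamMax hh := le_ciSup (Set.finite_range _).bddAbove i
  simp only [Pi.zero_apply]
  exact_mod_cast sub_nonneg.mpr this

theorem density_energy_le {d : ℕ} {h σ : Matrix (Fin d) (Fin d) ℂ} (hh : h.IsHermitian)
    (hσ : IsDensity σ) : (σ * h).trace.re ≤ lamMax hh := by
  have := trace_mul_re_nonneg hσ.1 (lamMax_sub_posSemidef hh)
  rw [Matrix.mul_sub, Matrix.trace_sub, Matrix.mul_smul, Matrix.trace_smul, Matrix.mul_one,
    hσ.2] at this
  simpa using this

theorem trace_pure_mul {d : ℕ} (ψ : Fin d → ℂ) (h : Matrix (Fin d) (Fin d) ℂ) :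
    (vecMulVec ψ (star ψ) * h).trace = star ψ ⬝ᵥ h.mulVec ψ := by
  rw [Matrix.vecMulVec_mul, Matrix.trace_vecMulVec, dotProduct_comm, dotProduct_mulVec]

theorem pure_density {d : ℕ} {ψ : Fin d → ℂ} (hψ : star ψ ⬝ᵥ ψ = 1) :
    IsDensity (vecMulVec ψ (star ψ)) :=
  ⟨posSemidef_vecMulVec_self_star ψ, by rw [Matrix.trace_vecMulVec, dotProduct_comm, hψ]⟩

/-- A density matrix is a convex combination of pure states, by diagonalization. -/
theorem density_pure_decomp {d : ℕ} {σ : Matrix (Fin d) (Fin d) ℂ} (hσ : IsDensity σ) :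
    ∃ (l : Fin d → ℝ) (v : Fin d → Fin d → ℂ), (∀ a, 0 ≤ l a) ∧ ∑ a, l a = 1 ∧
      (∀ a, star (v a) ⬝ᵥ v a = 1) ∧
      ∀ x y, σ x y = ∑ a, (l a : ℂ) * vecMulVec (v a) (star (v a)) x y := by
  set U : Matrix (Fin d) (Fin d) ℂ := hσ.1.isHermitian.eigenvectorUnitary.1
  have hUU : Uᴴ * U = 1 := Unitary.coe_star_mul_self hσ.1.isHermitian.eigenvectorUnitary
  have hspec : σ = U * diagonal (fun i => (hσ.1.isHermitian.eigenvalues i : ℂ)) * Uᴴ :=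
    hσ.1.isHermitian.spectral_theorem
  refine ⟨hσ.1.isHermitian.eigenvalues, fun a x => U x a, hσ.1.eigenvalues_nonneg, ?_, ?_, ?_⟩
  · have h1 : (1 : ℂ) = ∑ a, ((hσ.1.isHermitian.eigenvalues a : ℝ) : ℂ) :=
      hσ.2.symm.trans hσ.1.isHermitian.trace_eq_sum_eigenvalues
    exact_mod_cast h1.symm
  · intro a
    have := congrFun (congrFun hUU a) a
    simpa [Matrix.mul_apply, dotProduct] using this
  · intro x y
    conv_lhs => rw [hspec]
    rw [Matrix.mul_apply]
    refine Finset.sum_congr rfl fun a _ => ?_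
    rw [Matrix.mul_diagonal]
    simp [vecMulVec_apply]
    ring

/-! ### Tensor products -/

theorem prodMat_mul {d n : ℕ} (A B : Fin n → Matrix (Fin d) (Fin d) ℂ) :
    prodMat A * prodMat B = prodMat fun i => A i * B i := by
  ext f g
  simp only [prodMat, Matrix.mul_apply, Matrix.of_apply, ← Finset.prod_mul_distrib]
  rw [Fintype.prod_sum]

theorem prodMat_trace {d n : ℕ} (A : Fin n → Matrix (Fin d) (Fin d) ℂ) :
    (prodMat A).trace = ∏ i, (A i).trace := by
  simp only [prodMat, Matrix.trace, Matrix.diag_apply, Matrix.of_apply]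
  rw [Fintype.prod_sum]

theorem prodMat_posSemidef {d n : ℕ} {A : Fin n → Matrix (Fin d) (Fin d) ℂ}
    (hA : ∀ i, (A i).PosSemidef) : (prodMat A).PosSemidef := by
  choose B hB using fun i => PosSemidef.exists_factor (hA i)
  have : prodMat A = (prodMat B)ᴴ * prodMat B := by
    have hstar : (prodMat B)ᴴ = prodMat fun i => (B i)ᴴ := by
      ext f g
      simp [prodMat, Matrix.conjTranspose_apply]
    rw [hstar, prodMat_mul]
    congr 1
    exact funext hB
  rw [this]
  exact Matrix.posSemidef_conjTranspose_mul_self _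

/-- The `i`-th summand of `hSum` is the tensor product with `h` at site `i` and `1` elsewhere. -/
theorem hSum_eq {d : ℕ} (h : Matrix (Fin d) (Fin d) ℂ) (n : ℕ) :
    hSum h n = ∑ i : Fin n, prodMat (Function.update (fun _ => 1) i h) := by
  ext f g
  rw [Matrix.sum_apply]
  simp only [hSum, prodMat, Matrix.of_apply]
  refine Finset.sum_congr rfl fun i _ => ?_
  rw [← Finset.mul_prod_erase _ _ (Finset.mem_univ i), Function.update_self]
  congr 1
  refine Finset.prod_congr rfl fun j hj => ?_
  rw [Function.update_of_ne (Finset.ne_of_mem_erase hj), Matrix.one_apply]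

theorem hSum_posSemidef {d : ℕ} {h : Matrix (Fin d) (Fin d) ℂ} (hps : h.PosSemidef) (n : ℕ) :
    (hSum h n).PosSemidef := by
  rw [hSum_eq]
  refine Matrix.posSemidef_sum _ fun i _ => prodMat_posSemidef fun j => ?_
  by_cases hj : j = i
  · subst hj; simpa using hps
  · simpa [hj] using Matrix.PosSemidef.one

theorem prodMat_energy {d n : ℕ} {A : Fin n → Matrix (Fin d) (Fin d) ℂ}
    (hA : ∀ i, (A i).trace = 1) (h : Matrix (Fin d) (Fin d) ℂ) :
    (prodMat A * hSum h n).trace = ∑ i, (A i * h).trace := by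
  rw [hSum_eq, Finset.mul_sum, Matrix.trace_sum]
  refine Finset.sum_congr rfl fun i _ => ?_
  rw [prodMat_mul, prodMat_trace, ← Finset.mul_prod_erase _ _ (Finset.mem_univ i),
    Function.update_self, Finset.prod_eq_one, mul_one]
  intro j hj
  rw [Function.update_of_ne (Finset.ne_of_mem_erase hj), mul_one, hA]

/-! ### Ergotropy -/

/-- The extracted work is bounded by the initial energy, since the final energy is nonnegative. -/
theorem ergo_term_le {n : Type*} [Fintype n] [DecidableEq n] {ρ H : Matrix n n ℂ}
    (hρ : ρ.PosSemidef) (hH : H.PosSemidef) (U : Matrix.unitaryGroup n ℂ) :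
    (ρ * H).trace.re - ((U : Matrix n n ℂ) * ρ * star (U : Matrix n n ℂ) * H).trace.re
      ≤ (ρ * H).trace.re := by
  have := trace_mul_re_nonneg (hρ.mul_mul_conjTranspose_same (U : Matrix n n ℂ)) hH
  rw [Matrix.star_eq_conjTranspose]
  linarith

theorem ergo_le {n : Type*} [Fintype n] [DecidableEq n] {ρ H : Matrix n n ℂ}
    (hρ : ρ.PosSemidef) (hH : H.PosSemidef) : ergo ρ H ≤ (ρ * H).trace.re :=
  ciSup_le (ergo_term_le hρ hH)

theorem ergo_bddAbove {n : Type*} [Fintype n] [DecidableEq n] {ρ H : Matrix n n ℂ}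
    (hρ : ρ.PosSemidef) (hH : H.PosSemidef) :
    BddAbove (Set.range fun U : Matrix.unitaryGroup n ℂ => (ρ * H).trace.re -
      ((U : Matrix n n ℂ) * ρ * star (U : Matrix n n ℂ) * H).trace.re) :=
  ⟨_, Set.forall_mem_range.mpr (ergo_term_le hρ hH)⟩

/-- Convexity of the ergotropy in the state: it is a supremum of linear functions. -/
theorem ergo_sum_le {n J : Type*} [Fintype n] [DecidableEq n] [Fintype J] {H : Matrix n n ℂ}
    (hH : H.PosSemidef) (w : J → ℝ) (hw : ∀ j, 0 ≤ w j) (τ : J → Matrix n n ℂ)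
    (hτ : ∀ j, (τ j).PosSemidef) :
    ergo (∑ j, (w j : ℂ) • τ j) H ≤ ∑ j, w j * ergo (τ j) H := by
  refine ciSup_le fun U => ?_
  have hlin : ∀ V W : Matrix n n ℂ, (V * (∑ j, (w j : ℂ) • τ j) * W * H).trace.re
      = ∑ j, w j * (V * τ j * W * H).trace.re := by
    intro V W
    simp [Finset.mul_sum, Finset.sum_mul, Matrix.trace_sum]
  have h1 := hlin 1 1
  simp only [Matrix.one_mul, Matrix.mul_one] at h1
  rw [h1, hlin, ← Finset.sum_sub_distrib]
  refine Finset.sum_le_sum fun j _ => ?_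
  rw [← mul_sub]
  exact mul_le_mul_of_nonneg_left (le_ciSup (ergo_bddAbove (hτ j) hH) U) (hw j)

/-- A channel maps density matrices to density matrices: positivity is complete positivity for the
one-dimensional ancilla. -/
theorem channel_density {d : ℕ} {Λ : Matrix (Fin d) (Fin d) ℂ →ₗ[ℂ] Matrix (Fin d) (Fin d) ℂ}
    (hΛ : IsChannel Λ) {σ : Matrix (Fin d) (Fin d) ℂ} (hσ : IsDensity σ) : IsDensity (Λ σ) := by
  refine ⟨?_, by rw [hΛ.1, hσ.2]⟩
  have h1 := hΛ.2 1 (σ.submatrix Prod.fst Prod.fst) (hσ.1.submatrix _)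
  exact h1.submatrix fun i : Fin d => (i, (0 : Fin 1))

theorem ergo_tpow_le {d : ℕ} {σ h : Matrix (Fin d) (Fin d) ℂ} (hσ : IsDensity σ)
    (hps : h.PosSemidef) (N : ℕ+) :
    ergo (tpow σ (N : ℕ)) (hSum h (N : ℕ)) / (N : ℕ) ≤ lamMax hps.isHermitian := by
  have h1 := ergo_le (prodMat_posSemidef (n := (N : ℕ)) fun _ => hσ.1) (hSum_posSemidef hps N)
  rw [prodMat_energy fun _ => hσ.2] at h1
  have h2 := density_energy_le hps.isHermitian hσ
  have hN : (0 : ℝ) < ((N : ℕ) : ℝ) := by exact_mod_cast N.pos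
  rw [div_le_iff₀ hN]
  refine h1.trans ?_
  simp only [Finset.sum_const, Finset.card_univ, Fintype.card_fin, nsmul_eq_mul, Complex.mul_re,
    Complex.natCast_re, Complex.natCast_im, zero_mul, sub_zero]
  nlinarith

theorem Etot_le {d : ℕ} {σ h : Matrix (Fin d) (Fin d) ℂ} (hσ : IsDensity σ)
    (hps : h.PosSemidef) : Etot σ h ≤ lamMax hps.isHermitian :=
  ciSup_le (ergo_tpow_le hσ hps)

theorem le_Etot {d : ℕ} {σ h : Matrix (Fin d) (Fin d) ℂ} (hσ : IsDensity σ)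
    (hps : h.PosSemidef) {n : ℕ} (hn : 1 ≤ n) :
    ergo (tpow σ n) (hSum h n) / n ≤ Etot σ h :=
  le_ciSup (f := fun N : ℕ+ => ergo (tpow σ (N : ℕ)) (hSum h (N : ℕ)) / (N : ℕ))
    ⟨_, Set.forall_mem_range.mpr (ergo_tpow_le hσ hps)⟩ ⟨n, hn⟩

theorem E1tot_le {d : ℕ} {Λ : Matrix (Fin d) (Fin d) ℂ →ₗ[ℂ] Matrix (Fin d) (Fin d) ℂ}
    (hΛ : IsChannel Λ) {h : Matrix (Fin d) (Fin d) ℂ} (hps : h.PosSemidef)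
    (h0 : 0 ≤ lamMax hps.isHermitian) (e : ℝ) : E1tot Λ h e ≤ lamMax hps.isHermitian := by
  refine Real.sSup_le ?_ h0
  rintro x ⟨ρ, hρ, -, rfl⟩
  exact Etot_le (channel_density hΛ hρ) hps

theorem le_E1tot {d : ℕ} {Λ : Matrix (Fin d) (Fin d) ℂ →ₗ[ℂ] Matrix (Fin d) (Fin d) ℂ}
    (hΛ : IsChannel Λ) {h : Matrix (Fin d) (Fin d) ℂ} (hps : h.PosSemidef) {e : ℝ}
    {σ : Matrix (Fin d) (Fin d) ℂ} (hσ : IsDensity σ) (he : (σ * h).trace.re ≤ e) :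
    Etot (Λ σ) h ≤ E1tot Λ h e := by
  refine le_csSup ⟨lamMax hps.isHermitian, ?_⟩ ⟨σ, hσ, he, rfl⟩
  rintro x ⟨ρ, hρ, -, rfl⟩
  exact Etot_le (channel_density hΛ hρ) hps

/-- Any finite index type may be used for the ensembles in the definition of `chiTot`. -/
theorem le_chiTot {d : ℕ} {Λ : Matrix (Fin d) (Fin d) ℂ →ₗ[ℂ] Matrix (Fin d) (Fin d) ℂ}
    (hΛ : IsChannel Λ) {h : Matrix (Fin d) (Fin d) ℂ} (hps : h.PosSemidef)
    (h0 : 0 ≤ lamMax hps.isHermitian) {e : ℝ} {J : Type*} [Fintype J] (w ev : J → ℝ)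
    (hw : ∀ j, 0 ≤ w j) (hw1 : ∑ j, w j = 1)
    (hev : ∀ j, ev j ∈ Set.Icc (0:ℝ) (lamMax hps.isHermitian)) (he : ∑ j, w j * ev j ≤ e) :
    ∑ j, w j * E1tot Λ h (ev j) ≤ chiTot Λ h (lamMax hps.isHermitian) e := by
  let φ := (Fintype.equivFin J).symm
  refine le_csSup ⟨lamMax hps.isHermitian, ?_⟩ ⟨Fintype.card J, w ∘ φ, ev ∘ φ, fun j => hw _, ?_,
    fun j => hev _, ?_, ?_⟩
  · rintro x ⟨m, p, ev', hp, hp1, -, -, rfl⟩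
    calc ∑ j, p j * E1tot Λ h (ev' j) ≤ ∑ j, p j * lamMax hps.isHermitian :=
          Finset.sum_le_sum fun j _ => mul_le_mul_of_nonneg_left (E1tot_le hΛ hps h0 _) (hp j)
      _ = lamMax hps.isHermitian := by rw [← Finset.sum_mul, hp1, one_mul]
  · rw [← hw1]; exact φ.sum_comp w
  · exact (φ.sum_comp fun j => w j * ev j).trans_le he
  · exact (φ.sum_comp fun j => w j * E1tot Λ h (ev j)).symm

/-! ### Pure-product decomposition of separable states -/

theorem sep_pure_decomp {d n : ℕ} {ρ : Matrix (Fin n → Fin d) (Fin n → Fin d) ℂ}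
    (hρ : SepState ρ) :
    ∃ (m : ℕ) (w : Fin m × (Fin n → Fin d) → ℝ)
      (ψ : Fin m × (Fin n → Fin d) → Fin n → Fin d → ℂ),
      (∀ j, 0 ≤ w j) ∧ ∑ j, w j = 1 ∧ (∀ j i, star (ψ j i) ⬝ᵥ ψ j i = 1) ∧
      ρ = ∑ j, (w j : ℂ) • prodMat fun i => vecMulVec (ψ j i) (star (ψ j i)) := by
  obtain ⟨m, p, σs, hp, hp1, hσ, rfl⟩ := hρ
  choose l v hl hl1 hv hdec using fun k i => density_pure_decomp (hσ k i)
  refine ⟨m, fun j => p j.1 * ∏ i, l j.1 i (j.2 i), fun j i => v j.1 i (j.2 i),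
    fun j => mul_nonneg (hp _) (Finset.prod_nonneg fun i _ => hl _ _ _), ?_,
    fun j i => hv _ _ _, ?_⟩
  · rw [Fintype.sum_prod_type]
    simp only [← Finset.mul_sum, ← Fintype.prod_sum, hl1, Finset.prod_const_one, mul_one, hp1]
  · rw [Fintype.sum_prod_type]
    refine Finset.sum_congr rfl fun k _ => ?_
    ext f g
    simp only [Matrix.smul_apply, Matrix.sum_apply, prodMat, Matrix.of_apply, hdec,
      Fintype.prod_sum, smul_eq_mul, Finset.mul_sum, Complex.ofReal_mul, Complex.ofReal_prod,
      Finset.prod_mul_distrib, mul_assoc]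

theorem statement15 {d : ℕ} (hd : 0 < d)
    (Λ : Matrix (Fin d) (Fin d) ℂ →ₗ[ℂ] Matrix (Fin d) (Fin d) ℂ) (hΛ : IsChannel Λ)
    (h : Matrix (Fin d) (Fin d) ℂ) (hps : h.PosSemidef)
    (Λfam : ∀ n : ℕ, Matrix (Fin n → Fin d) (Fin n → Fin d) ℂ →ₗ[ℂ]
      Matrix (Fin n → Fin d) (Fin n → Fin d) ℂ)
    (hΛfam : ∀ (n : ℕ) (ρs : Fin n → Matrix (Fin d) (Fin d) ℂ),
      Λfam n (prodMat ρs) = prodMat fun i => Λ (ρs i))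
    (𝔢 : ℝ) (h𝔢 : 𝔢 ∈ Set.Icc (0:ℝ) (lamMax hps.isHermitian))
    (hopt : ∀ e ∈ Set.Icc (0:ℝ) (lamMax hps.isHermitian), ∀ n : ℕ, 1 ≤ n →
      ∃ σ : Matrix (Fin d) (Fin d) ℂ, IsDensity σ ∧ (σ * h).trace.re ≤ e ∧
        ∀ ψ : Fin n → (Fin d → ℂ), (∀ i, star (ψ i) ⬝ᵥ ψ i = 1) →
          (∑ i, (star (ψ i) ⬝ᵥ h.mulVec (ψ i)).re) ≤ n * e →
          ergo (Λfam n (prodMat fun i => Matrix.vecMulVec (ψ i) (star (ψ i)))) (hSum h n)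
            ≤ ergo (tpow (Λ σ) n) (hSum h n))
 :
    ∀ n : ℕ, 1 ≤ n → ∀ ρ : Matrix (Fin n → Fin d) (Fin n → Fin d) ℂ,
      IsDensity ρ → SepState ρ → (ρ * hSum h n).trace.re ≤ n * 𝔢 →
      ergo (Λfam n ρ) (hSum h n) / n ≤ chiTot Λ h (lamMax hps.isHermitian) 𝔢 := by
  intro n hn ρ _ hsep hen
  have hn0 : (0 : ℝ) < n := by exact_mod_cast hn
  obtain ⟨m, w, ψ, hw, hw1, hψ, rfl⟩ := sep_pure_decomp hsep
  -- the mean energy per site of each pure product state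
  set ev : Fin m × (Fin n → Fin d) → ℝ :=
    fun j => (∑ i, (star (ψ j i) ⬝ᵥ h.mulVec (ψ j i)).re) / n with hev
  have hnev : ∀ j, (∑ i, (star (ψ j i) ⬝ᵥ h.mulVec (ψ j i)).re) = n * ev j := by
    intro j; simp only [hev]; field_simp
  have hevmem : ∀ j, ev j ∈ Set.Icc (0:ℝ) (lamMax hps.isHermitian) := by
    intro j
    constructor
    · refine div_nonneg (Finset.sum_nonneg fun i _ => ?_) hn0.le
      rw [← trace_pure_mul]
      exact trace_mul_re_nonneg (pure_density (hψ j i)).1 hps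
    · rw [div_le_iff₀ hn0]
      calc ∑ i, (star (ψ j i) ⬝ᵥ h.mulVec (ψ j i)).re
          ≤ ∑ _i : Fin n, lamMax hps.isHermitian := Finset.sum_le_sum fun i _ => by
            rw [← trace_pure_mul]
            exact density_energy_le hps.isHermitian (pure_density (hψ j i))
        _ = lamMax hps.isHermitian * n := by simp [mul_comm]
  have hbudget : ∑ j, w j * ev j ≤ 𝔢 := by
    have htr : ((∑ j, (w j : ℂ) • prodMat fun i => vecMulVec (ψ j i) (star (ψ j i)))
        * hSum h n).trace.re = ∑ j, w j * (n * ev j) := by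
      rw [Finset.sum_mul, Matrix.trace_sum, Complex.re_sum]
      refine Finset.sum_congr rfl fun j _ => ?_
      rw [Matrix.smul_mul, Matrix.trace_smul, prodMat_energy fun i => (pure_density (hψ j i)).2,
        smul_eq_mul, Complex.re_ofReal_mul, Complex.re_sum, ← hnev]
      simp only [trace_pure_mul]
    rw [htr] at hen
    have : ∑ j, w j * (n * ev j) = n * ∑ j, w j * ev j := by
      rw [Finset.mul_sum]; exact Finset.sum_congr rfl fun j _ => by ring
    rw [this] at hen
    exact le_of_mul_le_mul_left hen hn0
  have hterm : ∀ j, ergo (prodMat fun i => Λ (vecMulVec (ψ j i) (star (ψ j i)))) (hSum h n)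
      ≤ n * E1tot Λ h (ev j) := by
    intro j
    obtain ⟨σ, hσ, hσe, hσopt⟩ := hopt (ev j) (hevmem j) n hn
    have h1 := hσopt (ψ j) (hψ j) (hnev j).le
    rw [hΛfam] at h1
    have h2 := (le_Etot (channel_density hΛ hσ) hps hn).trans (le_E1tot hΛ hps hσ hσe)
    rw [div_le_iff₀ hn0] at h2
    linarith
  have hmap : Λfam n (∑ j, (w j : ℂ) • prodMat fun i => vecMulVec (ψ j i) (star (ψ j i)))
      = ∑ j, (w j : ℂ) • prodMat fun i => Λ (vecMulVec (ψ j i) (star (ψ j i))) := by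
    simp only [map_sum, map_smul, hΛfam]
  rw [hmap, div_le_iff₀ hn0]
  calc ergo (∑ j, (w j : ℂ) • prodMat fun i => Λ (vecMulVec (ψ j i) (star (ψ j i)))) (hSum h n)
      ≤ ∑ j, w j * ergo (prodMat fun i => Λ (vecMulVec (ψ j i) (star (ψ j i)))) (hSum h n) :=
        ergo_sum_le (hSum_posSemidef hps n) w hw _ fun j => prodMat_posSemidef fun i =>
          (channel_density hΛ (pure_density (hψ j i))).1
    _ ≤ ∑ j, w j * (n * E1tot Λ h (ev j)) :=
        Finset.sum_le_sum fun j _ => mul_le_mul_of_nonneg_left (hterm j) (hw j)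
    _ = (∑ j, w j * E1tot Λ h (ev j)) * n := by
        rw [Finset.sum_mul]; exact Finset.sum_congr rfl fun j _ => by ring
    _ ≤ chiTot Λ h (lamMax hps.isHermitian) 𝔢 * n :=
        mul_le_mul_of_nonneg_right
          (le_chiTot hΛ hps (h𝔢.1.trans h𝔢.2) w ev hw hw1 hevmem hbudget) hn0.le

end
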